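/- Let d ≥ 2 and 0 < β < α < 2, and set γ := min(α−β, α/2) if α ≠ 2β and γ := β/2 if α = 2β. Then there exists a constant c = c(d, α, β) > 0 with the following property. Let B = B(x₀, r) ⊂ ℝ^d be a ball with 0 < r ≤ 1, let κ, c₁ > 0, and let G₀, S : B × B → ℝ be measurable functions satisfying |G₀(x,y)| ≤ c₁·g_B(x,y) and |S(z,y)| ≤ κ·h_B(z,y) for all distinct pairs of points in B. Define recursively G_n(x,y) := ∫_B G_{n−1}(x,z)·S(z,y) dz for n ≥ 1. Then for every n ≥ 0 and all distinct x, y ∈ B: |G_n(x,y)| ≤ c₁·(κ·c·r^{γ})^n·g_B(x,y). -/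

import Mathlib

open MeasureTheory Metric Set

noncomputable section

/-- distance to the boundary `∂D` -/
def deltaD {d : ℕ} (D : Set (EuclideanSpace ℝ (Fin d))) (x : EuclideanSpace ℝ (Fin d)) : ℝ :=
  Metric.infDist x (frontier D)

/-- the kernel `g_D(x,y)`, comparable to the Green function of the killed
symmetric `α`-stable process in `D` -/
def gKer {d : ℕ} (α : ℝ) (D : Set (EuclideanSpace ℝ (Fin d)))
    (x y : EuclideanSpace ℝ (Fin d)) : ℝ :=
  ‖x - y‖ ^ (α - (d : ℝ)) * min 1 (deltaD D x / ‖x - y‖) ^ (α / 2)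
    * min 1 (deltaD D y / ‖x - y‖) ^ (α / 2)

/-- the kernel `h_D(x,y)` -/
def hKer {d : ℕ} (α β : ℝ) (D : Set (EuclideanSpace ℝ (Fin d)))
    (x y : EuclideanSpace ℝ (Fin d)) : ℝ :=
  if 2 * β < α then
    ‖x - y‖ ^ (α - β - (d : ℝ)) * min 1 (deltaD D y / ‖x - y‖) ^ (α / 2)
  else if α = 2 * β then
    ‖x - y‖ ^ (β - (d : ℝ)) * min 1 (deltaD D y / ‖x - y‖) ^ β
      * max 1 (Real.log (‖x - y‖ / deltaD D x))
  else
    ‖x - y‖ ^ (α - β - (d : ℝ)) * min 1 (deltaD D y / ‖x - y‖) ^ (α / 2)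
      * max 1 (‖x - y‖ / deltaD D x) ^ (β - α / 2)


lemma rpow_ratio_neg {p s L k : ℝ} (hp : p ≤ 0) (hs : 0 < s) (hL : 0 < L) (hk : 0 < k) (h : L ≤ k * s) :
    s ^ p ≤ k ^ (-p) * L ^ p := by
  have h1 : (k * s) ^ p ≤ L ^ p := Real.rpow_le_rpow_of_nonpos hL h hp
  rw [Real.mul_rpow hk.le hs.le] at h1
  have h2 : k ^ (-p) * k ^ p = 1 := by rw [← Real.rpow_add hk]; simp
  have h3 : (0:ℝ) ≤ k ^ (-p) := by positivity
  calc s ^ p = k ^ (-p) * (k ^ p * s ^ p) := by rw [← mul_assoc, h2, one_mul]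
    _ ≤ _ := by gcongr

lemma min_ratio {k s L u : ℝ} (hk : 1 ≤ k) (hs : 0 < s) (hL : 0 < L) (hu : 0 < u) (h : L ≤ k * s) :
    min 1 (u / s) ≤ k * min 1 (u / L) := by
  have hk0 : 0 < k := by linarith
  rcases le_total 1 (u / L) with h1 | h1
  · rw [min_eq_left h1]
    exact (min_le_left _ _).trans (by linarith)
  · rw [min_eq_right h1]
    refine (min_le_right _ _).trans ?_
    rw [← mul_div_assoc, div_le_div_iff₀ hs hL]
    nlinarith

lemma rpow_min_ratio {k s L u q : ℝ} (hq : 0 ≤ q) (hk : 1 ≤ k) (hs : 0 < s) (hL : 0 < L) (hu : 0 < u)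
    (h : L ≤ k * s) : min 1 (u / s) ^ q ≤ k ^ q * min 1 (u / L) ^ q := by
  rw [← Real.mul_rpow (by linarith) (by positivity)]
  exact Real.rpow_le_rpow (by positivity) (min_ratio hk hs hL hu h) hq

lemma key_min {s t L dy dz : ℝ} (hs : 0 < s) (ht : 0 < t) (hL : 0 < L)
    (hy : 0 < dy) (hz : 0 < dz) (hzy : dz ≤ dy + t) (hLs : L ≤ 2 * s) (hts : t ≤ 3 * s) :
    min 1 (dz / s) * max 1 (t / dz) * min 1 (dy / t) ≤ 4 * min 1 (dy / L) := by
  have hm1 : min 1 (dz / s) ≤ 1 := min_le_left _ _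
  have hm2 : min 1 (dz / s) ≤ dz / s := min_le_right _ _
  have hm0 : 0 ≤ min 1 (dz / s) := by positivity
  have hn1 : min 1 (dy / t) ≤ 1 := min_le_left _ _
  have hn2 : min 1 (dy / t) ≤ dy / t := min_le_right _ _
  have hn0 : 0 ≤ min 1 (dy / t) := by positivity
  have hsL : dy / s ≤ 2 * (dy / L) := by
    rw [← mul_div_assoc, div_le_div_iff₀ hs hL]; nlinarith
  have hyL : 0 < dy / L := by positivity
  rw [mul_min_of_nonneg _ _ (by norm_num : (0:ℝ) ≤ 4)]
  rcases le_total dz t with h | h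
  · rw [max_eq_right ((one_le_div hz).2 h)]
    have hA : min 1 (dz / s) * (t / dz) ≤ t / s := by
      calc _ ≤ dz / s * (t / dz) := by gcongr
        _ = t / s := by field_simp
    refine le_min ?_ ?_
    · calc _ ≤ t / s * 1 := by gcongr
        _ ≤ 3 * 1 := by gcongr; rwa [div_le_iff₀ hs]
        _ ≤ _ := by norm_num
    · calc _ ≤ t / s * (dy / t) := by gcongr
        _ = dy / s := by field_simp
        _ ≤ _ := by linarith
  · rw [max_eq_left ((div_le_one hz).2 h), mul_one]
    refine le_min ?_ ?_
    · calc _ ≤ (1:ℝ) * 1 := by gcongr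
        _ ≤ _ := by norm_num
    · rcases le_total t dy with h' | h'
      · calc _ ≤ dz / s * 1 := by gcongr
          _ ≤ (2 * dy) / s * 1 := by gcongr; linarith
          _ = 2 * (dy / s) := by ring
          _ ≤ _ := by linarith
      · calc _ ≤ dz / s * (dy / t) := by gcongr
          _ ≤ (2 * t) / s * (dy / t) := by gcongr; linarith
          _ = 2 * (dy / s) := by field_simp
          _ ≤ _ := by linarith

lemma min_max_le {s t dz : ℝ} (hs : 0 < s) (ht : 0 < t) (hz : 0 < dz) :
    min 1 (dz / s) * max 1 (t / dz) ≤ max 1 (t / s) := by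
  rw [mul_max_of_nonneg _ _ (by positivity)]
  refine max_le_max (by simp) ?_
  calc _ ≤ dz / s * (t / dz) := by gcongr; exact min_le_right _ _
    _ = t / s := by field_simp

/-- pointwise 3G-type inequality -/
lemma pointwise {d α β a s t L dx dy dz : ℝ} (hd : α ≤ d) (hβ : 0 < β) (hβα : β < α)
    (ha : 0 ≤ a) (ha2 : a < α / 2) (hs : 0 < s) (ht : 0 < t) (hL : 0 < L)
    (hx : 0 < dx) (hy : 0 < dy) (hz : 0 < dz) (hzy : dz ≤ dy + t)
    (h1 : L ≤ s + t) (h3 : t ≤ L + s) :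
    (s ^ (α - d) * min 1 (dx / s) ^ (α / 2) * min 1 (dz / s) ^ (α / 2)) *
      (t ^ (α - β - d) * min 1 (dy / t) ^ (α / 2) * max 1 (t / dz) ^ a) ≤
    (2 ^ (d - α) * 2 ^ (α / 2) * 4 ^ (α / 2) + 2 ^ (d + β - α) * 2 ^ (α / 2) * 2 ^ a) *
      (L ^ (α - d) * min 1 (dx / L) ^ (α / 2) * min 1 (dy / L) ^ (α / 2)) *
      (t ^ (α - β - d) + L ^ (α / 2 + a - β) * s ^ (α / 2 - a - d)) := by
  have hα0 : 0 ≤ α / 2 := by linarith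
  have hg0 : 0 ≤ L ^ (α - d) * min 1 (dx / L) ^ (α / 2) * min 1 (dy / L) ^ (α / 2) := by positivity
  rcases le_total L (2 * s) with h | h
  · have e1 : s ^ (α - d) ≤ 2 ^ (d - α) * L ^ (α - d) := by
      have := rpow_ratio_neg (p := α - d) (by linarith) hs hL (by norm_num : (0:ℝ) < 2) h
      rwa [neg_sub] at this
    have e2 := rpow_min_ratio (k := 2) hα0 (by norm_num) hs hL hx h
    have e3 : min 1 (dz / s) ^ (α / 2) * max 1 (t / dz) ^ a * min 1 (dy / t) ^ (α / 2) ≤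
        4 ^ (α / 2) * min 1 (dy / L) ^ (α / 2) := by
      calc _ ≤ min 1 (dz / s) ^ (α / 2) * max 1 (t / dz) ^ (α / 2) * min 1 (dy / t) ^ (α / 2) := by
            gcongr
            exact le_max_left _ _
        _ = (min 1 (dz / s) * max 1 (t / dz) * min 1 (dy / t)) ^ (α / 2) := by
            rw [Real.mul_rpow (by positivity) (by positivity), Real.mul_rpow (by positivity) (by positivity)]
        _ ≤ (4 * min 1 (dy / L)) ^ (α / 2) :=
            Real.rpow_le_rpow (by positivity) (key_min hs ht hL hy hz hzy h (by linarith)) hα0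
        _ = _ := by rw [Real.mul_rpow (by positivity) (by positivity)]
    calc _ = s ^ (α - d) * min 1 (dx / s) ^ (α / 2) * (min 1 (dz / s) ^ (α / 2) * max 1 (t / dz) ^ a * min 1 (dy / t) ^ (α / 2)) * t ^ (α - β - d) := by ring
      _ ≤ (2 ^ (d - α) * L ^ (α - d)) * (2 ^ (α / 2) * min 1 (dx / L) ^ (α / 2)) * (4 ^ (α / 2) * min 1 (dy / L) ^ (α / 2)) * t ^ (α - β - d) := by gcongr
      _ = (2 ^ (d - α) * 2 ^ (α / 2) * 4 ^ (α / 2) + 0) *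
      (L ^ (α - d) * min 1 (dx / L) ^ (α / 2) * min 1 (dy / L) ^ (α / 2)) *
      (t ^ (α - β - d) + 0) := by ring
      _ ≤ _ := by
        gcongr <;> positivity
  · have hLt : L ≤ 2 * t := by linarith
    have e1 : t ^ (α - β - d) ≤ 2 ^ (d + β - α) * L ^ (α - β - d) := by
      have := rpow_ratio_neg (p := α - β - d) (by linarith) ht hL (by norm_num : (0:ℝ) < 2) hLt
      rwa [show -(α - β - d) = d + β - α by ring] at this
    have e2 := rpow_min_ratio (k := 2) hα0 (by norm_num) ht hL hy hLt
    have hLs : 1 ≤ L / s := by rw [one_le_div hs]; linarith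
    have e3 := rpow_min_ratio (k := L / s) (L := L) hα0 hLs hs hL hx (by field_simp; exact le_rfl)
    have e4 : min 1 (dz / s) ^ (α / 2) * max 1 (t / dz) ^ a ≤ 2 ^ a * (L / s) ^ a := by
      calc _ ≤ min 1 (dz / s) ^ a * max 1 (t / dz) ^ a := by
            gcongr ?_ * _
            exact Real.rpow_le_rpow_of_exponent_ge (by positivity) (min_le_left _ _) ha2.le
        _ = (min 1 (dz / s) * max 1 (t / dz)) ^ a := by
            rw [Real.mul_rpow (by positivity) (by positivity)]
        _ ≤ (2 * (L / s)) ^ a := by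
            refine Real.rpow_le_rpow (by positivity) ((min_max_le hs ht hz).trans ?_) ha
            refine max_le (by linarith) ?_
            rw [← mul_div_assoc]
            gcongr
            linarith
        _ = _ := by rw [Real.mul_rpow (by positivity) (by positivity)]
    have e5 : s ^ (α - d) * (L / s) ^ (α / 2) * (L / s) ^ a * L ^ (α - β - d)
        = L ^ (α - d) * (L ^ (α / 2 + a - β) * s ^ (α / 2 - a - d)) := by
      have hdiv : ∀ q : ℝ, (L / s) ^ q = L ^ q * s ^ (-q) := fun q => by
        rw [Real.div_rpow hL.le hs.le, Real.rpow_neg hs.le]; rfl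
      rw [hdiv, hdiv]
      calc _ = (s ^ (α - d) * s ^ (-(α/2)) * s ^ (-a)) * (L ^ (α/2) * L ^ a * L ^ (α - β - d)) := by ring
        _ = s ^ (α / 2 - a - d) * (L ^ (α - d) * L ^ (α / 2 + a - β)) := by
          rw [← Real.rpow_add hs, ← Real.rpow_add hs, ← Real.rpow_add hL, ← Real.rpow_add hL, ← Real.rpow_add hL]
          congr 2 <;> ring
        _ = _ := by ring
    calc _ = s ^ (α - d) * min 1 (dx / s) ^ (α / 2) * (min 1 (dz / s) ^ (α / 2) * max 1 (t / dz) ^ a) * t ^ (α - β - d) * min 1 (dy / t) ^ (α / 2) := by ring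
      _ ≤ s ^ (α - d) * ((L / s) ^ (α / 2) * min 1 (dx / L) ^ (α / 2)) * (2 ^ a * (L / s) ^ a) * (2 ^ (d + β - α) * L ^ (α - β - d)) * (2 ^ (α / 2) * min 1 (dy / L) ^ (α / 2)) := by gcongr
      _ = (s ^ (α - d) * (L / s) ^ (α / 2) * (L / s) ^ a * L ^ (α - β - d)) * 2 ^ a * 2 ^ (d + β - α) * 2 ^ (α / 2) * min 1 (dx / L) ^ (α / 2) * min 1 (dy / L) ^ (α / 2) := by ring
      _ = (0 + 2 ^ (d + β - α) * 2 ^ (α / 2) * 2 ^ a) *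
      (L ^ (α - d) * min 1 (dx / L) ^ (α / 2) * min 1 (dy / L) ^ (α / 2)) *
      (0 + L ^ (α / 2 + a - β) * s ^ (α / 2 - a - d)) := by rw [e5]; ring
      _ ≤ _ := by
        gcongr <;> positivity

lemma radial {d : ℕ} (hd : 2 ≤ d) {p : ℝ} (hp : 0 < p) (y : EuclideanSpace ℝ (Fin d)) {R : ℝ}
    (hR : 0 < R) :
    IntegrableOn (fun z : EuclideanSpace ℝ (Fin d) => ‖z - y‖ ^ (p - (d : ℝ))) (ball y R) ∧
    ∫ z in ball y R, ‖z - y‖ ^ (p - (d : ℝ)) =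
      R ^ p * ∫ z in ball (0 : EuclideanSpace ℝ (Fin d)) 1, ‖z‖ ^ (p - (d : ℝ)) := by
  have hpre : (fun z => z - y) ⁻¹' (ball (0 : EuclideanSpace ℝ (Fin d)) R) = ball y R := by
    ext z; simp [dist_eq_norm]
  have hmp := measurePreserving_sub_right (volume : Measure (EuclideanSpace ℝ (Fin d))) y
  have hemb : MeasurableEmbedding (fun z : EuclideanSpace ℝ (Fin d) => z - y) :=
    (Homeomorph.subRight y).measurableEmbedding
  constructor
  · rw [← hpre]
    refine (hmp.integrableOn_comp_preimage hemb (f := fun z => ‖z‖ ^ (p - (d : ℝ)))).2 ?_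
    refine integrableOn_ball_of_norm_le_rpow (C := 1) (α := d - p) (by simp; omega) (by simpa using hp) ?_ ?_
    · refine Filter.Eventually.of_forall fun z => ?_
      rw [one_mul, neg_sub, Real.norm_of_nonneg (by positivity)]
    · exact (measurable_norm.pow_const _).aestronglyMeasurable
  · rw [← hpre, hmp.setIntegral_preimage_emb hemb (fun z => ‖z‖ ^ (p - (d : ℝ)))]
    have h := Measure.setIntegral_comp_smul_of_pos (volume : Measure (EuclideanSpace ℝ (Fin d)))
      (fun z : EuclideanSpace ℝ (Fin d) => ‖z‖ ^ (p - (d : ℝ))) (ball 0 1) hR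
    rw [smul_unitBall_of_pos hR] at h
    have h2 : ∀ z : EuclideanSpace ℝ (Fin d), ‖R • z‖ ^ (p - (d : ℝ)) =
        R ^ (p - (d : ℝ)) * ‖z‖ ^ (p - (d : ℝ)) := fun z => by
      rw [norm_smul, Real.norm_of_nonneg hR.le, Real.mul_rpow hR.le (norm_nonneg _)]
    simp_rw [h2] at h
    rw [integral_const_mul, finrank_euclideanSpace_fin, smul_eq_mul, Real.rpow_sub hR,
      Real.rpow_natCast] at h
    field_simp at h
    linarith

lemma radial_sub {d : ℕ} (hd : 2 ≤ d) {p : ℝ} (hp : 0 < p) (x₀ y : EuclideanSpace ℝ (Fin d)) {r : ℝ}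
    (hr : 0 < r) (hy : y ∈ ball x₀ r) :
    IntegrableOn (fun z : EuclideanSpace ℝ (Fin d) => ‖z - y‖ ^ (p - (d : ℝ))) (ball x₀ r) ∧
    ∫ z in ball x₀ r, ‖z - y‖ ^ (p - (d : ℝ)) ≤
      (2 * r) ^ p * ∫ z in ball (0 : EuclideanSpace ℝ (Fin d)) 1, ‖z‖ ^ (p - (d : ℝ)) := by
  have hsub : ball x₀ r ⊆ ball y (2 * r) := by
    intro z hz
    rw [mem_ball] at *
    linarith [dist_triangle_right z y x₀]
  obtain ⟨h1, h2⟩ := radial hd hp y (R := 2 * r) (by linarith)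
  refine ⟨h1.mono_set hsub, ?_⟩
  rw [← h2]
  refine setIntegral_mono_set h1 (Filter.Eventually.of_forall fun z => ?_) hsub.eventuallyLE
  show (0:ℝ) ≤ _
  positivity

lemma hKer_bound (d : ℕ) (α β : ℝ) (hβ : 0 < β) (hβα : β < α) :
    ∃ a C : ℝ, 0 ≤ a ∧ a < α / 2 ∧ β - α / 2 ≤ a ∧ 0 < C ∧
      ∀ (D : Set (EuclideanSpace ℝ (Fin d))) (z y : EuclideanSpace ℝ (Fin d)), z ≠ y →
        0 < deltaD D z → 0 < deltaD D y →
        hKer α β D z y ≤ C * (‖z - y‖ ^ (α - β - (d : ℝ)) * min 1 (deltaD D y / ‖z - y‖) ^ (α / 2)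
          * max 1 (‖z - y‖ / deltaD D z) ^ a) := by
  rcases lt_trichotomy (2 * β) α with h | h | h
  · refine ⟨0, 1, le_rfl, by linarith, by linarith, one_pos, fun D z y hne hz hy => ?_⟩
    simp [hKer, h]
  · refine ⟨β / 2, max 1 (1 / (β / 2)), by linarith, by linarith, by linarith, by positivity,
      fun D z y hne hz hy => ?_⟩
    have ht : 0 < ‖z - y‖ := norm_sub_pos_iff.2 hne
    rw [hKer, if_neg (by linarith), if_pos h.symm, show α - β = β by linarith,
      show α / 2 = β by linarith]
    have key : max 1 (Real.log (‖z - y‖ / deltaD D z)) ≤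
        max 1 (1 / (β / 2)) * max 1 (‖z - y‖ / deltaD D z) ^ (β / 2) := by
      have hu : 0 < ‖z - y‖ / deltaD D z := by positivity
      have h1 : 1 ≤ max 1 (‖z - y‖ / deltaD D z) ^ (β / 2) :=
        Real.one_le_rpow (le_max_left _ _) (by linarith)
      refine max_le ?_ ?_
      · exact one_le_mul_of_one_le_of_one_le (le_max_left _ _) h1
      · calc _ ≤ (‖z - y‖ / deltaD D z) ^ (β / 2) / (β / 2) :=
              Real.log_le_rpow_div hu.le (by linarith)
          _ = 1 / (β / 2) * (‖z - y‖ / deltaD D z) ^ (β / 2) := by ring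
          _ ≤ _ := by
            gcongr
            · exact le_max_right _ _
            · exact le_max_right _ _
    calc _ ≤ ‖z - y‖ ^ (β - (d : ℝ)) * min 1 (deltaD D y / ‖z - y‖) ^ β *
          (max 1 (1 / (β / 2)) * max 1 (‖z - y‖ / deltaD D z) ^ (β / 2)) := by gcongr
      _ = _ := by ring
  · refine ⟨β - α / 2, 1, by linarith, by linarith, le_rfl, one_pos, fun D z y hne hz hy => ?_⟩
    rw [hKer, if_neg (by linarith), if_neg (by linarith), one_mul]

lemma deltaD_pos {d : ℕ} (hd : 2 ≤ d) {x₀ x : EuclideanSpace ℝ (Fin d)} {r : ℝ} (hr : 0 < r)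
    (hx : x ∈ ball x₀ r) : 0 < deltaD (ball x₀ r) x := by
  haveI : Nonempty (Fin d) := ⟨⟨0, by omega⟩⟩
  unfold deltaD
  rw [frontier_ball x₀ hr.ne']
  refine (isClosed_sphere.notMem_iff_infDist_pos (NormedSpace.sphere_nonempty.2 hr.le)).1 ?_
  rw [mem_sphere]
  exact (mem_ball.1 hx).ne

lemma gKer_nonneg {d : ℕ} (α : ℝ) (D : Set (EuclideanSpace ℝ (Fin d)))
    (x y : EuclideanSpace ℝ (Fin d)) : 0 ≤ gKer α D x y := by
  have : ∀ z, 0 ≤ deltaD D z := fun z => infDist_nonneg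
  have h1 := this x
  have h2 := this y
  unfold gKer
  positivity

/-- the integral estimate -/
lemma integral_step (d : ℕ) (hd : 2 ≤ d) (α β : ℝ)
    (hβ : 0 < β) (hβα : β < α) (hα : α < 2) :
    ∃ c > 0, ∀ (x₀ : EuclideanSpace ℝ (Fin d)) (r : ℝ), 0 < r →
      ∀ x ∈ ball x₀ r, ∀ y ∈ ball x₀ r, x ≠ y → ∃ F : EuclideanSpace ℝ (Fin d) → ℝ,
        IntegrableOn F (ball x₀ r) ∧
        (∫ z in ball x₀ r, F z) ≤ c * r ^ (α - β) * gKer α (ball x₀ r) x y ∧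
        ∀ z ∈ ball x₀ r, z ≠ x → z ≠ y →
          gKer α (ball x₀ r) x z * hKer α β (ball x₀ r) z y ≤ F z := by
  obtain ⟨a, C, ha0, ha1, ha2, hC, hh⟩ := hKer_bound d α β hβ hβα
  have hdα : α ≤ d := by
    have : (2:ℝ) ≤ d := by exact_mod_cast hd
    linarith
  set K : ℝ := 2 ^ ((d:ℝ) - α) * 2 ^ (α / 2) * 4 ^ (α / 2) + 2 ^ ((d:ℝ) + β - α) * 2 ^ (α / 2) * 2 ^ a with hK
  have hKpos : 0 < K := by positivity
  set I₁ : ℝ := ∫ z in ball (0 : EuclideanSpace ℝ (Fin d)) 1, ‖z‖ ^ ((α - β) - (d : ℝ)) with hI₁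
  set I₂ : ℝ := ∫ z in ball (0 : EuclideanSpace ℝ (Fin d)) 1, ‖z‖ ^ ((α / 2 - a) - (d : ℝ)) with hI₂
  have hI₁0 : 0 ≤ I₁ := integral_nonneg fun z => by positivity
  have hI₂0 : 0 ≤ I₂ := integral_nonneg fun z => by positivity
  refine ⟨C * K * (2 ^ (α - β) * (I₁ + I₂ + 1)), by positivity, fun x₀ r hr x hx y hy hxy => ?_⟩
  have hL : 0 < ‖x - y‖ := norm_sub_pos_iff.2 hxy
  have hL2 : ‖x - y‖ ≤ 2 * r := by
    rw [← dist_eq_norm]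
    linarith [dist_triangle_right x y x₀, mem_ball.1 hx, mem_ball.1 hy]
  have hg := gKer_nonneg α (ball x₀ r) x y
  obtain ⟨i1, j1⟩ := radial_sub hd (p := α - β) (by linarith) x₀ y hr hy
  obtain ⟨i2, j2⟩ := radial_sub hd (p := α / 2 - a) (by linarith) x₀ x hr hx
  refine ⟨fun z => C * K * gKer α (ball x₀ r) x y * (‖z - y‖ ^ ((α - β) - (d : ℝ)) +
    (2 * r) ^ (α / 2 + a - β) * ‖z - x‖ ^ ((α / 2 - a) - (d : ℝ))), ?_, ?_, ?_⟩
  · exact (i1.add (i2.const_mul _)).const_mul _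
  · rw [integral_const_mul, integral_add i1 (i2.const_mul _), integral_const_mul]
    have e : (2 * r) ^ (α / 2 + a - β) * (2 * r) ^ (α / 2 - a) = (2 * r) ^ (α - β) := by
      rw [← Real.rpow_add (by linarith)]; congr 1; ring
    have e2 : (2 * r) ^ (α - β) = 2 ^ (α - β) * r ^ (α - β) := Real.mul_rpow (by norm_num) hr.le
    calc _ ≤ C * K * gKer α (ball x₀ r) x y * ((2 * r) ^ (α - β) * I₁ +
          (2 * r) ^ (α / 2 + a - β) * ((2 * r) ^ (α / 2 - a) * I₂)) := by gcongr
      _ = C * K * (2 ^ (α - β) * (I₁ + I₂ + 0)) * r ^ (α - β) * gKer α (ball x₀ r) x y := by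
        rw [← mul_assoc ((2 * r) ^ (α / 2 + a - β)), e, e2]; ring
      _ ≤ _ := by gcongr; norm_num
  · intro z hz hzx hzy
    have dx := deltaD_pos hd hr hx
    have dy := deltaD_pos hd hr hy
    have dz := deltaD_pos hd hr hz
    have hs : 0 < ‖x - z‖ := norm_sub_pos_iff.2 hzx.symm
    have ht : 0 < ‖z - y‖ := norm_sub_pos_iff.2 hzy
    have hdz : deltaD (ball x₀ r) z ≤ deltaD (ball x₀ r) y + ‖z - y‖ := by
      rw [← dist_eq_norm]; exact infDist_le_infDist_add_dist
    have hp := pointwise (d := d) hdα hβ hβα ha0 ha1 hs ht hL dx dy dz hdz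
      (norm_sub_le_norm_sub_add_norm_sub x z y)
      (by have := norm_sub_le_norm_sub_add_norm_sub z x y; rw [norm_sub_rev z x] at this; linarith)
    have hLr : ‖x - y‖ ^ (α / 2 + a - β) ≤ (2 * r) ^ (α / 2 + a - β) :=
      Real.rpow_le_rpow hL.le hL2 (by linarith)
    calc _ ≤ gKer α (ball x₀ r) x z * (C * (‖z - y‖ ^ (α - β - (d : ℝ)) * min 1 (deltaD (ball x₀ r) y / ‖z - y‖) ^ (α / 2)
          * max 1 (‖z - y‖ / deltaD (ball x₀ r) z) ^ a)) :=
          mul_le_mul_of_nonneg_left (hh _ z y hzy dz dy) (gKer_nonneg _ _ _ _)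
      _ = C * (gKer α (ball x₀ r) x z * ((‖z - y‖ ^ (α - β - (d : ℝ)) * min 1 (deltaD (ball x₀ r) y / ‖z - y‖) ^ (α / 2)
          * max 1 (‖z - y‖ / deltaD (ball x₀ r) z) ^ a))) := by ring
      _ ≤ C * (K * gKer α (ball x₀ r) x y * (‖z - y‖ ^ ((α - β) - (d : ℝ)) +
          ‖x - y‖ ^ (α / 2 + a - β) * ‖x - z‖ ^ ((α / 2 - a) - (d : ℝ)))) :=
          mul_le_mul_of_nonneg_left hp hC.le
      _ ≤ C * (K * gKer α (ball x₀ r) x y * (‖z - y‖ ^ ((α - β) - (d : ℝ)) +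
          (2 * r) ^ (α / 2 + a - β) * ‖x - z‖ ^ ((α / 2 - a) - (d : ℝ)))) := by gcongr
      _ = _ := by rw [norm_sub_rev x z]; ring

/-- the contraction estimate `|G_n(x,y)| ≤ c₁ (κ c r^γ)^n g_B(x,y)` for the
perturbation series on small balls. -/
theorem perturbation_series_bound (d : ℕ) (hd : 2 ≤ d) (α β : ℝ)
    (hβ : 0 < β) (hβα : β < α) (hα : α < 2) :
    ∃ c > 0, ∀ (x₀ : EuclideanSpace ℝ (Fin d)) (r : ℝ), 0 < r → r ≤ 1 →
      ∀ κ c₁ : ℝ, 0 < κ → 0 < c₁ →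
      ∀ (G : ℕ → EuclideanSpace ℝ (Fin d) → EuclideanSpace ℝ (Fin d) → ℝ)
        (S : EuclideanSpace ℝ (Fin d) → EuclideanSpace ℝ (Fin d) → ℝ),
        Measurable (Function.uncurry (G 0)) → Measurable (Function.uncurry S) →
        (∀ x ∈ Metric.ball x₀ r, ∀ y ∈ Metric.ball x₀ r, x ≠ y →
          |G 0 x y| ≤ c₁ * gKer α (Metric.ball x₀ r) x y) →
        (∀ z ∈ Metric.ball x₀ r, ∀ y ∈ Metric.ball x₀ r, z ≠ y →
          |S z y| ≤ κ * hKer α β (Metric.ball x₀ r) z y) →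
        (∀ n : ℕ, ∀ x ∈ Metric.ball x₀ r, ∀ y ∈ Metric.ball x₀ r,
          G (n + 1) x y = ∫ z in Metric.ball x₀ r, G n x z * S z y) →
        ∀ n : ℕ, ∀ x ∈ Metric.ball x₀ r, ∀ y ∈ Metric.ball x₀ r, x ≠ y →
          |G n x y| ≤
            c₁ * (κ * c * r ^ (if α = 2 * β then β / 2 else min (α - β) (α / 2))) ^ n *
              gKer α (Metric.ball x₀ r) x y := by
  obtain ⟨c, hc, hstep⟩ := integral_step d hd α β hβ hβα hα
  refine ⟨c, hc, ?_⟩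
  intro x₀ r hr hr1 κ c₁ hκ hc₁ G S _ _ hG0 hS hrec
  set γ : ℝ := if α = 2 * β then β / 2 else min (α - β) (α / 2) with hγ
  have hγle : γ ≤ α - β := by
    rw [hγ]
    split_ifs with h
    · linarith
    · exact min_le_left _ _
  have hrγ : r ^ (α - β) ≤ r ^ γ := Real.rpow_le_rpow_of_exponent_ge hr hr1 hγle
  intro n
  induction n with
  | zero =>
    intro x hx y hy hxy
    simpa using hG0 x hx y hy hxy
  | succ n ih =>
    intro x hx y hy hxy
    obtain ⟨F, hF, hFi, hFb⟩ := hstep x₀ r hr x hx y hy hxy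
    have hg := gKer_nonneg α (ball x₀ r) x y
    set A : ℝ := c₁ * (κ * c * r ^ γ) ^ n with hA
    have hA0 : 0 ≤ A := by positivity
    rw [hrec n x hx y hy, ← Real.norm_eq_abs]
    have hae : ∀ᵐ z ∂(volume.restrict (ball x₀ r)), ‖G n x z * S z y‖ ≤ A * κ * F z := by
      haveI : Nonempty (Fin d) := ⟨⟨0, by omega⟩⟩
      have hx' : ∀ᵐ z ∂(volume.restrict (ball x₀ r)), z ≠ x := ae_restrict_of_ae (Measure.ae_ne _ x)
      have hy' : ∀ᵐ z ∂(volume.restrict (ball x₀ r)), z ≠ y := ae_restrict_of_ae (Measure.ae_ne _ y)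
      filter_upwards [hx', hy', ae_restrict_mem measurableSet_ball] with z hzx hzy hz
      rw [norm_mul, Real.norm_eq_abs, Real.norm_eq_abs]
      have hgz := gKer_nonneg α (ball x₀ r) x z
      calc _ ≤ (A * gKer α (ball x₀ r) x z) * (κ * hKer α β (ball x₀ r) z y) :=
            mul_le_mul (ih x hx z hz hzx.symm) (hS z hz y hy hzy) (abs_nonneg _) (by positivity)
        _ = A * κ * (gKer α (ball x₀ r) x z * hKer α β (ball x₀ r) z y) := by ring
        _ ≤ _ := mul_le_mul_of_nonneg_left (hFb z hz hzx hzy) (by positivity)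
    calc _ ≤ ∫ z in ball x₀ r, A * κ * F z := norm_integral_le_of_norm_le (hF.const_mul _) hae
      _ = A * κ * ∫ z in ball x₀ r, F z := integral_const_mul _ _
      _ ≤ A * κ * (c * r ^ (α - β) * gKer α (ball x₀ r) x y) := by gcongr
      _ ≤ A * κ * (c * r ^ γ * gKer α (ball x₀ r) x y) := by gcongr
      _ = _ := by rw [hA, pow_succ]; ring
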